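/- Let V ⊆ P^n be a variety and let φ : P^n → P^N be a regular map given by homogeneous polynomials f_0,...,f_N of degree D with no common zero. Then deg φ(V) ≤ deg V · D^{dim V}. -/

import Mathlib

open MvPolynomial

/-- Integer-valued binomial coefficient `C(a, b)`, zero when `a < 0` or `a < b`. -/
def ichoose (a : ℤ) (b : ℕ) : ℤ := if a < 0 then 0 else (a.toNat).choose b

/-- The Hilbert function of a (homogeneous) ideal `I ⊆ k[x₀, …, xₙ]`:
`m ↦ dim_k (k[x₀, …, xₙ]/I)_m`. -/
noncomputable def hilbF (k : Type*) [Field k] {n : ℕ}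
    (I : Ideal (MvPolynomial (Fin (n+1)) k)) (m : ℕ) : ℕ :=
  Module.finrank k ((homogeneousSubmodule (Fin (n+1)) k m).map
    (Ideal.Quotient.mkₐ k I).toLinearMap)

open scoped Classical in
/-- The Hilbert polynomial of `I` (the polynomial agreeing with the Hilbert
function for all large `m`; junk value `0` if none exists). -/
noncomputable def hilbP (k : Type*) [Field k] {n : ℕ}
    (I : Ideal (MvPolynomial (Fin (n+1)) k)) : Polynomial ℚ :=
  if h : ∃ P : Polynomial ℚ, ∀ᶠ m : ℕ in Filter.atTop,
      (hilbF k I m : ℚ) = P.eval (m : ℚ) then h.choose else 0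

/-- The (algebraic) degree of a homogeneous ideal `I` of projective dimension
`d ≥ 0`: `d! · (leading coefficient of its Hilbert polynomial)`. -/
noncomputable def idealDeg (k : Type*) [Field k] {n : ℕ}
    (I : Ideal (MvPolynomial (Fin (n+1)) k)) : ℕ :=
  ⌊((hilbP k I).natDegree.factorial : ℚ) * (hilbP k I).leadingCoeff⌋₊

/-- The projective dimension of a homogeneous ideal `I` (of dimension `≥ 0`):
the degree of its Hilbert polynomial. -/
noncomputable def idealDim (k : Type*) [Field k] {n : ℕ}
    (I : Ideal (MvPolynomial (Fin (n+1)) k)) : ℕ :=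
  (hilbP k I).natDegree

/-- A homogeneous ideal: one containing all homogeneous components of its elements. -/
def IsHomogeneousIdeal {k : Type*} [Field k] {n : ℕ}
    (I : Ideal (MvPolynomial (Fin (n+1)) k)) : Prop :=
  ∀ f ∈ I, ∀ m : ℕ, homogeneousComponent m f ∈ I

/-- `I` is unmixed of projective dimension `d`: every associated prime `P` of
`k[x₀,…,xₙ]/I` satisfies `dim k[x₀,…,xₙ]/P = d + 1` (affine Krull dimension). -/
def IsUnmixed (k : Type*) [Field k] {n : ℕ}
    (I : Ideal (MvPolynomial (Fin (n+1)) k)) (d : ℕ) : Prop :=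
  ∀ P ∈ associatedPrimes (MvPolynomial (Fin (n+1)) k)
      (MvPolynomial (Fin (n+1)) k ⧸ I),
    ringKrullDim (MvPolynomial (Fin (n+1)) k ⧸ P) = ((d + 1 : ℕ) : WithBot (WithTop ℕ))

/-- The vanishing ideal of a subset of the affine cone `k^{n+1}`. -/
noncomputable def vanIdeal (k : Type*) [Field k] {n : ℕ} (V : Set (Fin (n+1) → k)) :
    Ideal (MvPolynomial (Fin (n+1)) k) :=
  ⨅ x ∈ V, RingHom.ker (eval x)


/-- a function `ℕ → ℕ` agreeing with a rational polynomial eventually -/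
def EvPoly (f : ℕ → ℕ) : Prop :=
  ∃ P : Polynomial ℚ, ∀ᶠ m : ℕ in Filter.atTop, (f m : ℚ) = P.eval (m : ℚ)

lemma exists_sum_poly (P : Polynomial ℚ) :
    ∃ Q : Polynomial ℚ, ∀ m : ℕ, Q.eval ((m : ℚ) + 1) - Q.eval (m : ℚ) = P.eval (m : ℚ) := by
  induction P using Polynomial.induction_on' with
  | add p q hp hq =>
    obtain ⟨a, ha⟩ := hp
    obtain ⟨b, hb⟩ := hq
    refine ⟨a + b, fun m => ?_⟩
    simp only [Polynomial.eval_add, ← ha m, ← hb m]; ring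
  | monomial p c =>
    refine ⟨Polynomial.C (c / (p + 1)) * Polynomial.bernoulli (p + 1), fun m => ?_⟩
    have h1 := Polynomial.sum_range_pow_eq_bernoulli_sub m p
    have h2 := Polynomial.sum_range_pow_eq_bernoulli_sub (m + 1) p
    rw [Finset.sum_range_succ] at h2
    have h3 : ((p : ℚ) + 1) ≠ 0 := by positivity
    push_cast at h2
    simp only [Polynomial.eval_mul, Polynomial.eval_C, Polynomial.eval_monomial]
    simp only [Nat.succ_eq_add_one] at h1 h2
    have : Polynomial.eval ((m : ℚ) + 1) (Polynomial.bernoulli (p + 1))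
        - Polynomial.eval (m : ℚ) (Polynomial.bernoulli (p + 1)) = (p + 1) * (m : ℚ) ^ p := by
      linarith
    rw [← mul_sub, this]
    field_simp

lemma EvPoly.of_step {c a : ℕ → ℕ} (ha : EvPoly a)
    (h : ∀ m, c (m + 1) = a (m + 1) + c m) : EvPoly c := by
  obtain ⟨P, hP⟩ := ha
  obtain ⟨Q, hQ⟩ := exists_sum_poly (P.comp (Polynomial.X + 1))
  rw [Filter.eventually_atTop] at hP
  obtain ⟨M, hM⟩ := hP
  refine ⟨Q + Polynomial.C ((c M : ℚ) - Q.eval (M : ℚ)), ?_⟩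
  rw [Filter.eventually_atTop]
  refine ⟨M, fun m hm => ?_⟩
  induction m, hm using Nat.le_induction with
  | base => simp
  | succ m hm ih =>
    have h1 := hM (m + 1) (by omega)
    have h2 := hQ m
    rw [h m]
    push_cast at *
    simp only [Polynomial.eval_comp, Polynomial.eval_add, Polynomial.eval_X, Polynomial.eval_one,
      Polynomial.eval_C] at *
    rw [ih, h1]; linarith

lemma EvPoly.of_step' {c a b : ℕ → ℕ} (ha : EvPoly a) (hb : EvPoly b)
    (h : ∀ m, c (m + 1) = a (m + 1) + b m) : EvPoly c := by
  obtain ⟨P, hP⟩ := ha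
  obtain ⟨Q, hQ⟩ := hb
  refine ⟨P + Q.comp (Polynomial.X - 1), ?_⟩
  rw [Filter.eventually_atTop] at *
  obtain ⟨M, hM⟩ := hP
  obtain ⟨M', hM'⟩ := hQ
  refine ⟨M + M' + 1, fun m hm => ?_⟩
  obtain ⟨m, rfl⟩ : ∃ r, m = r + 1 := ⟨m - 1, by omega⟩
  rw [h, Nat.cast_add, hM _ (by omega), hM' _ (by omega)]
  simp

/-- number of points of degree `m` -/
noncomputable def cnt {n : ℕ} (U : Set (Fin n → ℕ)) (m : ℕ) : ℕ :=
  {a : Fin n → ℕ | a ∈ U ∧ ∑ i, a i = m}.ncard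

lemma deg_finite {n : ℕ} (U : Set (Fin n → ℕ)) (m : ℕ) :
    {a : Fin n → ℕ | a ∈ U ∧ ∑ i, a i = m}.Finite := by
  apply (Set.finite_Iic (fun _ : Fin n => m)).subset
  rintro a ⟨-, h⟩ i
  rw [← h]
  exact Finset.single_le_sum (f := a) (fun _ _ => Nat.zero_le _) (Finset.mem_univ i)

/-- slice at height zero -/
def slice0 {n : ℕ} (U : Set (Fin (n + 1) → ℕ)) : Set (Fin n → ℕ) :=
  {b | (Fin.cons 0 b : Fin (n + 1) → ℕ) ∈ U}

/-- shift in the zeroth coordinate -/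
def shift0 {n : ℕ} (U : Set (Fin (n + 1) → ℕ)) : Set (Fin (n + 1) → ℕ) :=
  {a | (Fin.cons (a 0 + 1) (Fin.tail a) : Fin (n + 1) → ℕ) ∈ U}

lemma mem_slice0 {n : ℕ} {U : Set (Fin (n + 1) → ℕ)} {b : Fin n → ℕ} :
    b ∈ slice0 U ↔ (Fin.cons 0 b : Fin (n + 1) → ℕ) ∈ U := Iff.rfl

lemma mem_shift0 {n : ℕ} {U : Set (Fin (n + 1) → ℕ)} {a : Fin (n + 1) → ℕ} :
    a ∈ shift0 U ↔ (Fin.cons (a 0 + 1) (Fin.tail a) : Fin (n + 1) → ℕ) ∈ U := Iff.rfl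

lemma cnt_succ {n : ℕ} (U : Set (Fin (n + 1) → ℕ)) (m : ℕ) :
    cnt U (m + 1) = cnt (slice0 U) (m + 1) + cnt (shift0 U) m := by
  unfold cnt
  have hinj1 : Function.Injective (fun b : Fin n → ℕ => (Fin.cons 0 b : Fin (n + 1) → ℕ)) :=
    fun a b h => (Fin.cons_injective2 h).2
  have hinj2 : Function.Injective
      (fun a : Fin (n + 1) → ℕ => (Fin.cons (a 0 + 1) (Fin.tail a) : Fin (n + 1) → ℕ)) := by
    intro a b h
    have := Fin.cons_injective2 h
    rw [← Fin.cons_self_tail a, ← Fin.cons_self_tail b, this.2]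
    congr 1
    omega
  rw [← Set.ncard_image_of_injective {a | a ∈ slice0 U ∧ _} hinj1,
    ← Set.ncard_image_of_injective {a | a ∈ shift0 U ∧ _} hinj2,
    ← Set.ncard_union_eq _ ((deg_finite _ _).image _) ((deg_finite _ _).image _)]
  · congr 1
    ext a
    simp only [Set.mem_ofPred_eq, Set.mem_union, mem_slice0, mem_shift0, Set.mem_image]
    constructor
    · rintro ⟨h1, h2⟩
      rw [Fin.sum_univ_succ] at h2
      by_cases h0 : a 0 = 0
      · left
        refine ⟨Fin.tail a, ⟨?_, ?_⟩, ?_⟩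
        · rw [← h0, Fin.cons_self_tail]; exact h1
        · simp only [Fin.tail]; omega
        · rw [← h0, Fin.cons_self_tail]
      · right
        refine ⟨Fin.cons (a 0 - 1) (Fin.tail a), ⟨?_, ?_⟩, ?_⟩
        · simp only [Fin.cons_zero, Fin.tail_cons]
          rw [Nat.sub_add_cancel (by omega), Fin.cons_self_tail]; exact h1
        · rw [Fin.sum_univ_succ]
          simp only [Fin.cons_zero, Fin.cons_succ, Fin.tail]; omega
        · simp only [Fin.cons_zero, Fin.tail_cons]
          rw [Nat.sub_add_cancel (by omega), Fin.cons_self_tail]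
    · rintro (⟨b, ⟨h1, h2⟩, rfl⟩ | ⟨b, ⟨h1, h2⟩, rfl⟩)
      · refine ⟨h1, ?_⟩
        rw [Fin.sum_univ_succ]; simpa using h2
      · refine ⟨h1, ?_⟩
        rw [Fin.sum_univ_succ] at h2 ⊢
        simp only [Fin.cons_zero, Fin.cons_succ, Fin.tail]; omega
  · rw [Set.disjoint_left]
    rintro _ ⟨b, _, rfl⟩ ⟨c, _, h⟩
    have := (Fin.cons_injective2 h).1
    omega

lemma cons_le' {n : ℕ} {i j : ℕ} {b c : Fin n → ℕ} (h : i ≤ j) (h' : b ≤ c) :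
    (Fin.cons i b : Fin (n + 1) → ℕ) ≤ Fin.cons j c := Fin.cons_le_cons.2 ⟨h, h'⟩

lemma lower_zero {n : ℕ} {U : Set (Fin (n + 1) → ℕ)} (hU : IsLowerSet U) :
    IsLowerSet (slice0 U) := by
  intro b c hbc hb
  simp only [mem_slice0] at hb ⊢
  exact hU (cons_le' le_rfl hbc) hb

lemma lower_shift {n : ℕ} {U : Set (Fin (n + 1) → ℕ)} (hU : IsLowerSet U) :
    IsLowerSet (shift0 U) := by
  intro b c hbc hb
  simp only [mem_shift0] at hb ⊢
  have h1 : c 0 + 1 ≤ b 0 + 1 := Nat.succ_le_succ (hbc 0)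
  have h2 : Fin.tail c ≤ Fin.tail b := fun i => hbc i.succ
  exact hU (cons_le' h1 h2) hb

theorem evPoly_cnt : ∀ (n : ℕ) (U : Set (Fin n → ℕ)), IsLowerSet U → EvPoly (cnt U)
  | 0, U, _ => by
    refine ⟨0, Filter.eventually_atTop.2 ⟨1, fun m hm => ?_⟩⟩
    simp [cnt, show (0 ≠ m) by omega]
  | n + 1, U, hU => by
    have key : ∀ (i₀ : ℕ) (U : Set (Fin (n + 1) → ℕ)), IsLowerSet U →
        (∀ i ≥ i₀, ∀ b : Fin n → ℕ, (Fin.cons i b : Fin (n + 1) → ℕ) ∈ U →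
          (Fin.cons (i + 1) b : Fin (n + 1) → ℕ) ∈ U) → EvPoly (cnt U) := by
      intro i₀
      induction i₀ with
      | zero =>
        intro U hU h
        have h0 : EvPoly (cnt (slice0 U)) :=
          evPoly_cnt n _ (lower_zero hU)
        refine h0.of_step (fun m => ?_)
        rw [cnt_succ]
        congr 2
        ext a
        simp only [mem_shift0]
        constructor
        · intro ha
          refine hU ?_ ha
          conv_lhs => rw [← Fin.cons_self_tail a]
          exact cons_le' (by omega) le_rfl
        · intro ha
          apply h _ (Nat.zero_le _)
          rwa [Fin.cons_self_tail]
      | succ i₀ ih =>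
        intro U hU h
        have h0 : EvPoly (cnt (slice0 U)) :=
          evPoly_cnt n _ (lower_zero hU)
        refine h0.of_step' (ih (shift0 U) (lower_shift hU) ?_)
          (cnt_succ U)
        · intro i hi b hb
          simp only [mem_shift0, Fin.cons_zero, Fin.tail_cons] at hb ⊢
          exact h _ (by omega) _ hb
    by_contra hcon
    have h2 : ∀ i₀ : ℕ, ∃ i ≥ i₀, ∃ b : Fin n → ℕ, (Fin.cons i b : Fin (n + 1) → ℕ) ∈ U ∧
          (Fin.cons (i + 1) b : Fin (n + 1) → ℕ) ∉ U := by
      intro i₀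
      by_contra h3
      push Not at h3
      exact hcon (key i₀ U hU h3)
    choose f hf b hb hb' using h2
    -- sequence
    let s : ℕ → ℕ := fun t => Nat.rec 0 (fun _ x => f x + 1) t
    have hs : ∀ t, s (t + 1) = f (s t) + 1 := fun t => rfl
    have hmono : Monotone s := monotone_nat_of_le_succ (fun t => by
      rw [hs]; have := hf (s t); omega)
    obtain ⟨p, q, hpq, hle⟩ := wellQuasiOrdered_le (α := Fin n → ℕ) (fun t => b (s t))
    apply hb' (s p)
    refine hU (cons_le' ?_ hle) (hb (s q))
    have h4 := hmono (show p + 1 ≤ q by omega)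
    have h5 := hf (s q)
    rw [hs] at h4
    omega

lemma leadingCoeff_nonneg_of_eventually (p : Polynomial ℚ)
    (h : ∀ᶠ m : ℕ in Filter.atTop, 0 ≤ p.eval (m : ℚ)) : 0 ≤ p.leadingCoeff := by
  by_contra hlt
  push Not at hlt
  by_cases hd : 0 < p.degree
  · have h1 := (p.tendsto_atBot_of_leadingCoeff_nonpos hd hlt.le).comp
      (tendsto_natCast_atTop_atTop (R := ℚ))
    obtain ⟨m, h2, h3⟩ := (h.and (h1.eventually_lt_atBot 0)).exists
    exact absurd h2 (not_le.2 h3)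
  · have := Polynomial.eq_C_of_degree_le_zero (not_lt.1 hd)
    obtain ⟨m, hm⟩ := h.exists
    rw [this] at hm hlt
    simp at hm hlt
    linarith

lemma poly_compare {p q : Polynomial ℚ}
    (hp : ∀ᶠ m : ℕ in Filter.atTop, 0 ≤ p.eval (m : ℚ))
    (h : ∀ᶠ m : ℕ in Filter.atTop, p.eval (m : ℚ) ≤ q.eval (m : ℚ)) :
    p.degree ≤ q.degree ∧ (p.degree = q.degree → p.leadingCoeff ≤ q.leadingCoeff) := by
  have h1 := leadingCoeff_nonneg_of_eventually p hp
  have h2 := leadingCoeff_nonneg_of_eventually (q - p) (by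
    filter_upwards [h] with m hm; simpa using hm)
  constructor
  · by_contra hlt
    push Not at hlt
    rw [Polynomial.leadingCoeff_sub_of_degree_lt' hlt] at h2
    have : p.leadingCoeff = 0 := by linarith
    rw [Polynomial.leadingCoeff_eq_zero] at this
    simp [this] at hlt
  · intro hd
    by_contra hlt
    push Not at hlt
    rw [Polynomial.leadingCoeff_sub_of_degree_eq hd.symm hlt.ne] at h2
    linarith

lemma int_of_evPoly {f : ℕ → ℕ} {P : Polynomial ℚ}
    (h : ∀ᶠ m : ℕ in Filter.atTop, (f m : ℚ) = P.eval (m : ℚ)) :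
    ∃ z : ℕ, (P.natDegree.factorial : ℚ) * P.leadingCoeff = z := by
  have hnn : 0 ≤ P.leadingCoeff := leadingCoeff_nonneg_of_eventually P (by
    filter_upwards [h] with m hm; rw [← hm]; positivity)
  rw [Filter.eventually_atTop] at h
  obtain ⟨M, hM⟩ := h
  have h1 := congrFun P.fwdDiff_iter_degree_eq_factorial (M : ℚ)
  rw [fwdDiff_iter_eq_sum_shift] at h1
  have h2 : ∃ z : ℤ, (P.natDegree.factorial : ℚ) * P.leadingCoeff = z := by
    refine ⟨∑ k ∈ Finset.range (P.natDegree + 1),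
      ((-1 : ℤ) ^ (P.natDegree - k) * P.natDegree.choose k) * (f (M + k) : ℤ), ?_⟩
    simp at h1
    rw [mul_comm, ← h1]
    push_cast
    refine Finset.sum_congr rfl (fun k _ => ?_)
    rw [hM _ (by omega)]
    push_cast
    rfl
  obtain ⟨z, hz⟩ := h2
  have hz0 : 0 ≤ z := by
    have : (0 : ℚ) ≤ z := by rw [← hz]; positivity
    exact_mod_cast this
  exact ⟨z.toNat, by rw [hz]; exact_mod_cast (Int.toNat_of_nonneg hz0).symm⟩

section HilbertPolynomial

variable {k : Type*} [Field k] {n : ℕ}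

/-- exponents which are not leading exponents of homogeneous elements of `I` -/
def stdExp (I : Ideal (MvPolynomial (Fin (n+1)) k)) : Set (Fin (n+1) →₀ ℕ) :=
  {a | ∀ f ∈ I, f.IsHomogeneous a.degree → f ≠ 0 →
    (MonomialOrder.lex (σ := Fin (n+1))).degree f ≠ a}

lemma stdExp_lower (I : Ideal (MvPolynomial (Fin (n+1)) k)) : IsLowerSet (stdExp I) := by
  intro a b hba ha f hf hfh hf0 hd
  refine ha (monomial (a - b) 1 * f) (I.mul_mem_left _ hf) ?_ ?_ ?_
  · have h1 : (monomial (a - b) (1 : k)).IsHomogeneous (a - b).degree :=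
      isHomogeneous_monomial _ rfl
    have h2 := h1.mul hfh
    rwa [← map_add, tsub_add_cancel_of_le hba] at h2
  · exact mul_ne_zero (by simp) hf0
  · classical
    rw [MonomialOrder.degree_mul (by simp) hf0, MonomialOrder.degree_monomial, hd]
    simp [tsub_add_cancel_of_le hba]

lemma degree_eq_of_hom {f : MvPolynomial (Fin (n+1)) k} {m : ℕ} (hf : f.IsHomogeneous m)
    {a : Fin (n+1) →₀ ℕ} (ha : a ∈ f.support) : a.degree = m := by
  rw [hf.degree_eq_sum_deg_support ha]; rfl

/-- standard exponents in degree `m` -/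
def stdDeg (I : Ideal (MvPolynomial (Fin (n+1)) k)) (m : ℕ) : Set (Fin (n+1) →₀ ℕ) :=
  {a | a ∈ stdExp I ∧ a.degree = m}

lemma mem_stdDeg {I : Ideal (MvPolynomial (Fin (n+1)) k)} {m : ℕ} {a : Fin (n+1) →₀ ℕ} :
    a ∈ stdDeg I m ↔ a ∈ stdExp I ∧ a.degree = m := Iff.rfl

lemma restrict_hom {I : Ideal (MvPolynomial (Fin (n+1)) k)} {m : ℕ}
    {f : MvPolynomial (Fin (n+1)) k} (hf : f ∈ restrictSupport k (stdDeg I m)) :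
    f.IsHomogeneous m := by
  rw [mem_restrictSupport_iff] at hf
  intro d hd
  have := (mem_stdDeg.1 (hf (mem_support_iff.2 hd))).2
  rw [← this, Finsupp.degree_eq_weight_one]; rfl

lemma restrict_inter {I : Ideal (MvPolynomial (Fin (n+1)) k)} {m : ℕ}
    {f : MvPolynomial (Fin (n+1)) k} (hf : f ∈ restrictSupport k (stdDeg I m)) (hI : f ∈ I) :
    f = 0 := by
  by_contra h0
  have h1 := (MonomialOrder.lex (σ := Fin (n+1))).degree_mem_support h0
  have hh := restrict_hom hf
  rw [mem_restrictSupport_iff] at hf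
  have h2 := mem_stdDeg.1 (hf h1)
  exact h2.1 f hI (by rw [h2.2]; exact hh) h0 rfl

lemma exists_reduce (I : Ideal (MvPolynomial (Fin (n+1)) k)) (m : ℕ) :
    ∀ (s : (MonomialOrder.lex (σ := Fin (n+1))).syn) (f : MvPolynomial (Fin (n+1)) k),
      f.IsHomogeneous m →
      (MonomialOrder.lex (σ := Fin (n+1))).toSyn
        ((MonomialOrder.lex (σ := Fin (n+1))).degree f) = s →
      ∃ r ∈ restrictSupport k (stdDeg I m), f - r ∈ I := by
  set o := MonomialOrder.lex (σ := Fin (n+1)) with ho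
  intro s
  induction s using WellFoundedLT.induction with
  | ind s ih =>
  intro f hf hs
  by_cases h0 : f = 0
  · exact ⟨0, Submodule.zero_mem _, by simp [h0]⟩
  have hdeg : (o.degree f).degree = m := degree_eq_of_hom hf (o.degree_mem_support h0)
  obtain ⟨g, hg, hg0, hgd, hgm⟩ : ∃ g : MvPolynomial (Fin (n+1)) k, g.IsHomogeneous m ∧ g ≠ 0 ∧
      o.degree g = o.degree f ∧ (g ∈ I ∨ g ∈ restrictSupport k (stdDeg I m)) := by
    by_cases hstd : o.degree f ∈ stdExp I
    · refine ⟨monomial (o.degree f) 1, isHomogeneous_monomial _ hdeg, by simp, ?_, Or.inr ?_⟩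
      · classical
        rw [MonomialOrder.degree_monomial]; simp
      · rw [monomial_mem_restrictSupport]
        exact Or.inl (mem_stdDeg.2 ⟨hstd, hdeg⟩)
    · have : ∃ g ∈ I, g.IsHomogeneous (o.degree f).degree ∧ g ≠ 0 ∧ o.degree g = o.degree f := by
        by_contra hcon
        push Not at hcon
        exact hstd (fun g h1 h2 h3 => hcon g h1 h2 h3)
      obtain ⟨g, h1, h2, h3, h4⟩ := this
      rw [hdeg] at h2
      exact ⟨g, h2, h3, h4, Or.inl h1⟩
  set c := o.leadingCoeff f / o.leadingCoeff g with hc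
  have hlg : o.leadingCoeff g ≠ 0 := o.leadingCoeff_ne_zero_iff.2 hg0
  have hf' : (f - C c * g).IsHomogeneous m := hf.sub (hg.C_mul c)
  have hcoef : (f - C c * g).coeff (o.degree f) = 0 := by
    rw [coeff_sub, coeff_C_mul]
    nth_rewrite 2 [← hgd]
    change o.leadingCoeff f - c * o.leadingCoeff g = 0
    rw [hc]; field_simp; ring
  have : ∃ r ∈ restrictSupport k (stdDeg I m), (f - C c * g) - r ∈ I := by
    by_cases h1 : f - C c * g = 0
    · exact ⟨0, Submodule.zero_mem _, by simp [h1]⟩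
    · refine ih _ ?_ _ hf' rfl
      rw [← hs]
      have hmem := o.degree_mem_support h1
      refine lt_of_le_of_ne ?_ ?_
      · by_contra hlt
        push Not at hlt
        rw [mem_support_iff] at hmem
        apply hmem
        rw [coeff_sub, coeff_C_mul, o.coeff_eq_zero_of_lt hlt,
          o.coeff_eq_zero_of_lt (by rw [hgd]; exact hlt)]
        simp
      · intro heq
        rw [o.toSyn.injective heq, mem_support_iff] at hmem
        exact hmem hcoef
  obtain ⟨r, hr, hrI⟩ := this
  rcases hgm with hgI | hgS
  · refine ⟨r, hr, ?_⟩
    have := I.add_mem hrI (I.mul_mem_left (C c) hgI)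
    convert this using 1; ring
  · refine ⟨r + c • g, Submodule.add_mem _ hr (Submodule.smul_mem _ _ hgS), ?_⟩
    convert hrI using 1
    rw [smul_eq_C_mul]; ring

lemma hilbF_eq_ncard (I : Ideal (MvPolynomial (Fin (n+1)) k)) (m : ℕ) :
    hilbF k I m = (stdDeg I m).ncard := by
  have h1 : (homogeneousSubmodule (Fin (n+1)) k m).map (Ideal.Quotient.mkₐ k I).toLinearMap
      = (restrictSupport k (stdDeg I m)).map (Ideal.Quotient.mkₐ k I).toLinearMap := by
    apply le_antisymm
    · rintro _ ⟨f, hf, rfl⟩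
      obtain ⟨r, hr, hrI⟩ := exists_reduce I m _ f hf rfl
      refine ⟨r, hr, ?_⟩
      exact ((Ideal.Quotient.eq).2 hrI).symm
    · exact Submodule.map_mono (fun f hf => restrict_hom hf)
  have h2 : Function.Injective ((Ideal.Quotient.mkₐ k I).toLinearMap.domRestrict
      (restrictSupport k (stdDeg I m))) := by
    rw [← LinearMap.ker_eq_bot, LinearMap.ker_eq_bot']
    rintro ⟨f, hf⟩ h
    have : f ∈ I := Ideal.Quotient.eq_zero_iff_mem.1 h
    exact Subtype.ext (restrict_inter hf this)
  unfold hilbF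
  rw [h1, ← LinearMap.range_domRestrict, LinearMap.finrank_range_of_inj h2,
    Module.finrank_eq_nat_card_basis (basisRestrictSupport k _)]
  rfl

lemma evPoly_hilbF (I : Ideal (MvPolynomial (Fin (n+1)) k)) : EvPoly (hilbF k I) := by
  have h := evPoly_cnt (n+1) {a | Finsupp.equivFunOnFinite.symm a ∈ stdExp I} (by
    intro a b hab ha
    exact stdExp_lower I (show Finsupp.equivFunOnFinite.symm b ≤ _ from hab) ha)
  convert h using 1
  funext m
  rw [hilbF_eq_ncard]
  unfold cnt
  rw [← Set.ncard_image_of_injective _ (Finsupp.equivFunOnFinite (M := ℕ)).symm.injective]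
  congr 1
  ext a
  simp only [mem_stdDeg, Set.mem_image, Set.mem_ofPred_eq]
  constructor
  · rintro ⟨h1, h2⟩
    refine ⟨a, ⟨by simpa using h1, ?_⟩, by simp⟩
    rw [← h2, Finsupp.degree_eq_sum]
  · rintro ⟨b, ⟨h1, h2⟩, rfl⟩
    refine ⟨h1, ?_⟩
    rw [← h2, Finsupp.degree_eq_sum]
    rfl

lemma hilbP_spec (I : Ideal (MvPolynomial (Fin (n+1)) k)) :
    ∀ᶠ m : ℕ in Filter.atTop, (hilbF k I m : ℚ) = (hilbP k I).eval (m : ℚ) := by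
  have h := evPoly_hilbF I
  unfold EvPoly at h
  unfold hilbP
  rw [dif_pos h]
  exact h.choose_spec

end HilbertPolynomial

section Main

variable {k : Type*} [Field k] {n N : ℕ}

lemma finrank_map_congr {M M₁ M₂ : Type*} [AddCommGroup M] [Module k M] [AddCommGroup M₁]
    [Module k M₁] [AddCommGroup M₂] [Module k M₂] (f : M →ₗ[k] M₁) (g : M →ₗ[k] M₂)
    (h : LinearMap.ker f = LinearMap.ker g) (W : Submodule k M) :
    Module.finrank k (W.map f) = Module.finrank k (W.map g) := by
  rw [← LinearMap.range_domRestrict, ← LinearMap.range_domRestrict]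
  refine LinearEquiv.finrank_eq ((LinearMap.quotKerEquivRange _).symm ≪≫ₗ
    (Submodule.quotEquivOfEq _ _ ?_) ≪≫ₗ (LinearMap.quotKerEquivRange _))
  ext x
  have : (x : M) ∈ LinearMap.ker f ↔ (x : M) ∈ LinearMap.ker g := by rw [h]
  simpa using this

instance finite_hom (m : ℕ) : Module.Finite k (homogeneousSubmodule (Fin (n+1)) k m) := by
  have hfin : {a : Fin (n+1) →₀ ℕ | a.degree = m}.Finite := by
    refine Set.Finite.of_finite_image (f := Finsupp.equivFunOnFinite) ?_
      (Finsupp.equivFunOnFinite (M := ℕ)).injective.injOn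
    refine (deg_finite Set.univ m).subset ?_
    rintro _ ⟨a, ha, rfl⟩
    refine ⟨trivial, ?_⟩
    rw [← show a.degree = m from ha, Finsupp.degree_eq_sum]; rfl
  have : Finite {a : Fin (n+1) →₀ ℕ | a.degree = m} := hfin
  have h2 : Module.Finite k (restrictSupport k {a : Fin (n+1) →₀ ℕ | a.degree = m}) :=
    Module.Finite.of_basis (basisRestrictSupport k _)
  have h3 : homogeneousSubmodule (Fin (n+1)) k m
      ≤ restrictSupport k {a : Fin (n+1) →₀ ℕ | a.degree = m} := by
    intro f hf
    rw [mem_restrictSupport_iff]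
    intro a ha
    exact degree_eq_of_hom hf ha
  exact Submodule.finiteDimensional_of_le h3

lemma finrank_mul_le' {A : Type*} [CommRing A] [Algebra k A] (P Q : Submodule k A)
    [Module.Finite k P] [Module.Finite k Q] :
    Module.finrank k ↥(P * Q) ≤ Module.finrank k P * Module.finrank k Q := by
  rw [← Submodule.mulMap_range, ← Module.finrank_tensorProduct]
  exact LinearMap.finrank_range_le _

lemma hom_comp_mul {t D : ℕ} (a f : MvPolynomial (Fin (n+1)) k) (hf : f.IsHomogeneous D) :
    homogeneousComponent (t + D) (a * f) = homogeneousComponent t a * f := by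
  conv_lhs => rw [← sum_homogeneousComponent a, Finset.sum_mul, map_sum]
  have : ∀ i, homogeneousComponent (t + D) (homogeneousComponent i a * f)
      = if i = t then homogeneousComponent t a * f else 0 := by
    intro i
    rw [homogeneousComponent_of_mem ((homogeneousComponent_isHomogeneous i a).mul hf)]
    by_cases h : i = t
    · simp [h]
    · rw [if_neg (by omega), if_neg h]
  simp only [this, Finset.sum_ite_eq', Finset.mem_range]
  split_ifs with h
  · rfl
  · rw [homogeneousComponent_eq_zero _ _ (by omega), zero_mul]

/-- forms of degree `m` in the `F j` -/
noncomputable def imgDeg (F : Fin (N+1) → MvPolynomial (Fin (n+1)) k) (m : ℕ) :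
    Submodule k (MvPolynomial (Fin (n+1)) k) :=
  (homogeneousSubmodule (Fin (N+1)) k m).map (aeval F).toLinearMap

lemma hom_le_imgDeg_mul {D e : ℕ} (F : Fin (N+1) → MvPolynomial (Fin (n+1)) k)
    (hF : ∀ j, (F j).IsHomogeneous D)
    (he : ∀ t ≥ e, ∀ s : MvPolynomial (Fin (n+1)) k, s.IsHomogeneous t →
      s ∈ Ideal.span (Set.range F)) (m : ℕ) :
    homogeneousSubmodule (Fin (n+1)) k (e + D * m)
      ≤ imgDeg F m * homogeneousSubmodule (Fin (n+1)) k e := by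
  induction m with
  | zero =>
    intro s hs
    rw [← one_mul s]
    exact Submodule.mul_mem_mul ⟨1, isHomogeneous_one _ _, by simp⟩ hs
  | succ m ih =>
    intro s hs
    rw [mem_homogeneousSubmodule] at hs
    obtain ⟨a, ha⟩ := Ideal.mem_span_range_iff_exists_fun.1 (he _ (by omega) s hs)
    have h1 : s = ∑ j, homogeneousComponent (e + D * m) (a j) * F j := by
      rw [show e + D * (m + 1) = e + D * m + D by ring] at hs
      conv_lhs => rw [← homogeneousComponent_eq_self hs, ← ha, map_sum]
      exact Finset.sum_congr rfl (fun j _ => hom_comp_mul _ _ (hF j))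
    rw [h1]
    refine Submodule.sum_mem _ (fun j _ => ?_)
    have h2 := ih (homogeneousComponent_mem (n := e + D * m) (a j))
    refine Submodule.mul_induction_on h2 ?_ ?_
    · rintro _ ⟨p, hp, rfl⟩ q hq
      have : ((aeval F).toLinearMap p * q) * F j = (aeval F).toLinearMap (p * X j) * q := by
        simp; ring
      rw [this]
      exact Submodule.mul_mem_mul ⟨_, IsHomogeneous.mul hp (isHomogeneous_X _ _), rfl⟩ hq
    · intro x y hx hy
      rw [add_mul]; exact Submodule.add_mem _ hx hy

lemma exists_large [IsAlgClosed k] (F : Fin (N+1) → MvPolynomial (Fin (n+1)) k)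
    (hFz : ∀ x : Fin (n+1) → k, x ≠ 0 → ∃ j, eval x (F j) ≠ 0) :
    ∃ e, ∀ t ≥ e, ∀ s : MvPolynomial (Fin (n+1)) k, s.IsHomogeneous t →
      s ∈ Ideal.span (Set.range F) := by
  have h1 : idealOfVars (Fin (n+1)) k ≤ (Ideal.span (Set.range F)).radical := by
    rw [← vanishingIdeal_zeroLocus_eq_radical (K := k)]
    rw [idealOfVars, Ideal.span_le]
    rintro _ ⟨i, rfl⟩
    rw [SetLike.mem_coe, mem_vanishingIdeal_iff]
    intro x hx
    rw [mem_zeroLocus_iff] at hx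
    have : x = 0 := by
      by_contra h
      obtain ⟨j, hj⟩ := hFz x h
      exact hj (by simpa [aeval_eq_eval] using hx _ (Ideal.subset_span ⟨j, rfl⟩))
    simp [this]
  obtain ⟨e, he⟩ := Ideal.exists_pow_le_of_le_radical_of_fg h1 (idealOfVars_fg _ _)
  refine ⟨e, fun t ht s hs => he ?_⟩
  rw [mem_pow_idealOfVars_iff]
  intro d hd
  rw [degree_eq_of_hom hs hd]
  exact ht

lemma vanIdeal_image (F : Fin (N+1) → MvPolynomial (Fin (n+1)) k) (V : Set (Fin (n+1) → k))
    (p : MvPolynomial (Fin (N+1)) k) :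
    p ∈ vanIdeal k ((fun x (j : Fin (N+1)) => eval x (F j)) '' V) ↔
      aeval F p ∈ vanIdeal k V := by
  have : ∀ x, eval x (aeval F p) = eval (fun j => eval x (F j)) p := by
    intro x
    induction p using MvPolynomial.induction_on with
    | C a => simp
    | add p q hp hq => simp only [map_add, hp, hq]
    | mul_X p i hp => simp only [map_mul, hp, aeval_X, eval_X]
  simp only [vanIdeal, Submodule.mem_iInf, RingHom.mem_ker, this, Set.forall_mem_image]

lemma hilbF_image (F : Fin (N+1) → MvPolynomial (Fin (n+1)) k) (V : Set (Fin (n+1) → k)) (m : ℕ) :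
    hilbF k (vanIdeal k ((fun x (j : Fin (N+1)) => eval x (F j)) '' V)) m =
      Module.finrank k ((imgDeg F m).map (Ideal.Quotient.mkₐ k (vanIdeal k V)).toLinearMap) := by
  unfold hilbF imgDeg
  rw [← Submodule.map_comp]
  apply finrank_map_congr
  ext p
  rw [LinearMap.mem_ker, LinearMap.mem_ker]
  exact Ideal.Quotient.eq_zero_iff_mem.trans ((vanIdeal_image F V p).trans
    Ideal.Quotient.eq_zero_iff_mem.symm)

lemma hilbF_image_le {D : ℕ} (F : Fin (N+1) → MvPolynomial (Fin (n+1)) k)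
    (hF : ∀ j, (F j).IsHomogeneous D) (V : Set (Fin (n+1) → k)) (m : ℕ) :
    hilbF k (vanIdeal k ((fun x (j : Fin (N+1)) => eval x (F j)) '' V)) m ≤
      hilbF k (vanIdeal k V) (D * m) := by
  rw [hilbF_image]
  refine Submodule.finrank_mono (Submodule.map_mono ?_)
  rintro _ ⟨p, hp, rfl⟩
  exact IsHomogeneous.aeval hp F hF

lemma le_hilbF_image {D e : ℕ} (F : Fin (N+1) → MvPolynomial (Fin (n+1)) k)
    (hF : ∀ j, (F j).IsHomogeneous D)
    (he : ∀ t ≥ e, ∀ s : MvPolynomial (Fin (n+1)) k, s.IsHomogeneous t →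
      s ∈ Ideal.span (Set.range F)) (V : Set (Fin (n+1) → k)) (m : ℕ) :
    hilbF k (vanIdeal k V) (e + D * m) ≤
      hilbF k (vanIdeal k ((fun x (j : Fin (N+1)) => eval x (F j)) '' V)) m *
        hilbF k (vanIdeal k V) e := by
  rw [hilbF_image]
  have : Module.Finite k (imgDeg F m) := by unfold imgDeg; infer_instance
  refine le_trans ?_ (finrank_mul_le' _ _)
  rw [← Submodule.map_mul]
  have : Module.Finite k ↥(imgDeg F m * homogeneousSubmodule (Fin (n+1)) k e) :=
    Module.Finite.iff_fg.2 (Submodule.FG.mul (Module.Finite.iff_fg.1 inferInstance)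
      (Module.Finite.iff_fg.1 inferInstance))
  refine Submodule.finrank_mono ?_
  exact Submodule.map_mono (hom_le_imgDeg_mul F hF he m)

end Main

/-- the degree of the image of a projective variety under a regular
map given by degree-`D` homogeneous polynomials with no common zero satisfies
`deg φ(V) ≤ deg V · D^{dim V}`.  (Varieties are represented by their affine
cones in `k^{n+1}`, and degree and dimension via the vanishing ideal.) -/
theorem degree_image_regular_map {k : Type*} [Field k] [IsAlgClosed k] {n N D : ℕ}
    (hD : 1 ≤ D)
    (F : Fin (N+1) → MvPolynomial (Fin (n+1)) k)
    (hFh : ∀ j, (F j).IsHomogeneous D)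
    (hFz : ∀ x : Fin (n+1) → k, x ≠ 0 → ∃ j, eval x (F j) ≠ 0)
    (V : Set (Fin (n+1) → k))
    (hV : ∃ S : Set (MvPolynomial (Fin (n+1)) k),
      (∀ f ∈ S, ∃ m, f.IsHomogeneous m) ∧ V = {x | ∀ f ∈ S, eval x f = 0}) :
    idealDeg k (vanIdeal k ((fun x (j : Fin (N+1)) => eval x (F j)) '' V)) ≤
      idealDeg k (vanIdeal k V) * D ^ idealDim k (vanIdeal k V) := by
  have hPI := hilbP_spec (vanIdeal k V)
  have hPJ := hilbP_spec (vanIdeal k ((fun x (j : Fin (N+1)) => eval x (F j)) '' V))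
  obtain ⟨e, he⟩ := exists_large F hFz
  have hle := hilbF_image_le F hFh V
  have hge := le_hilbF_image F hFh he V
  have hintI := int_of_evPoly hPI
  unfold idealDeg idealDim
  generalize hilbF k (vanIdeal k V) = hI at *
  generalize hilbF k (vanIdeal k ((fun x (j : Fin (N+1)) => eval x (F j)) '' V)) = hJ at *
  generalize hilbP k (vanIdeal k V) = P at *
  generalize hilbP k (vanIdeal k ((fun x (j : Fin (N+1)) => eval x (F j)) '' V)) = Q at *
  have hD0 : (D : ℚ) ≠ 0 := by exact_mod_cast (by omega : D ≠ 0)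
  have htend : Filter.Tendsto (fun m : ℕ => D * m) Filter.atTop Filter.atTop :=
    Filter.tendsto_id.const_mul_atTop' hD
  have htend2 : Filter.Tendsto (fun m : ℕ => e + D * m) Filter.atTop Filter.atTop :=
    Filter.tendsto_atTop_mono (fun m => Nat.le_add_left _ _) htend
  have h1 := htend.eventually hPI
  have h2 := htend2.eventually hPI
  set L : Polynomial ℚ := Polynomial.C (D : ℚ) * Polynomial.X with hL
  set L' : Polynomial ℚ := Polynomial.C (D : ℚ) * Polynomial.X + Polynomial.C (e : ℚ) with hL'
  have hLd : L.natDegree = 1 := Polynomial.natDegree_C_mul_X _ hD0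
  have hLd' : L'.natDegree = 1 := Polynomial.natDegree_linear hD0
  have hLl : L.leadingCoeff = D := Polynomial.leadingCoeff_C_mul_X _
  have hnn : ∀ᶠ m : ℕ in Filter.atTop, 0 ≤ Q.eval (m : ℚ) := by
    filter_upwards [hPJ] with m hm
    rw [← hm]; positivity
  have c1 : Q.degree ≤ (P.comp L).degree ∧
      (Q.degree = (P.comp L).degree → Q.leadingCoeff ≤ (P.comp L).leadingCoeff) := by
    apply poly_compare hnn
    filter_upwards [hPJ, h1] with m h3 h4
    have h5 : (hJ m : ℚ) ≤ hI (D * m) := by exact_mod_cast hle m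
    rw [← h3]
    refine h5.trans (le_of_eq ?_)
    rw [h4, Polynomial.eval_comp]
    simp [hL]
  have c2 := poly_compare (p := P.comp L') (q := Polynomial.C (hI e : ℚ) * Q) (by
      filter_upwards [h2] with m h4
      have : (P.comp L').eval (m : ℚ) = hI (e + D * m) := by
        rw [h4, Polynomial.eval_comp]; congr 1; simp [hL']; ring
      rw [this]; positivity) (by
      filter_upwards [h2, hPJ] with m h4 h3
      have : (P.comp L').eval (m : ℚ) = hI (e + D * m) := by
        rw [h4, Polynomial.eval_comp]; congr 1; simp [hL']; ring
      rw [this, Polynomial.eval_mul, Polynomial.eval_C, ← h3, mul_comm (hI e : ℚ)]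
      exact_mod_cast hge m)
  by_cases hQ : Q = 0
  · simp [hQ]
  have hlc : (P.comp L).leadingCoeff = P.leadingCoeff * (D : ℚ) ^ P.natDegree := by
    rw [Polynomial.leadingCoeff_comp (by rw [hLd]; simp), hLl]
  have d1 : Q.natDegree ≤ P.natDegree := by
    have := Polynomial.natDegree_le_natDegree c1.1
    rwa [Polynomial.natDegree_comp, hLd, mul_one] at this
  have d2 : P.natDegree ≤ Q.natDegree := by
    have := Polynomial.natDegree_le_natDegree c2.1
    rw [Polynomial.natDegree_comp, hLd', mul_one] at this
    exact this.trans (Polynomial.natDegree_C_mul_le _ _)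
  have hd : Q.natDegree = P.natDegree := le_antisymm d1 d2
  have hPL : P.comp L ≠ 0 := by
    intro h
    rw [h, Polynomial.degree_zero, le_bot_iff, Polynomial.degree_eq_bot] at c1
    exact hQ c1.1
  have hdeg : Q.degree = (P.comp L).degree := by
    rw [Polynomial.degree_eq_natDegree hQ, Polynomial.degree_eq_natDegree hPL,
      Polynomial.natDegree_comp, hLd, mul_one, hd]
  have hfin := c1.2 hdeg
  rw [hlc] at hfin
  obtain ⟨z, hz⟩ := hintI
  rw [hz, Nat.floor_natCast, hd]
  have : (P.natDegree.factorial : ℚ) * Q.leadingCoeff ≤ ((z * D ^ P.natDegree : ℕ) : ℚ) := by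
    push_cast
    rw [← hz, mul_assoc]
    exact mul_le_mul_of_nonneg_left hfin (by positivity)
  exact (Nat.floor_le_floor this).trans (le_of_eq (Nat.floor_natCast _))
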